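/- Let D be a non-trivial, non-symmetric 2-(v,k,3) design with 3 dividing r, admitting a flag-transitive, point-primitive automorphism group G that is almost simple with socle X = PSL(2,q), where X acts point-primitively on D with point stabilizer X_α maximal in X. Then X_α is not isomorphic to S4; that is, the case q = p prime with p ≡ ±1 (mod 8), X_α ≅ S4 and v = q(q²−1)/48, does not occur. -/

import Mathlib

/-!
Suppose `X_α ≅ S₄`, put `q = |F|`, and let `h ∈ X_α` have order `4`. The six elements of order `4`
of `X_α` are conjugate, so `4 |Fix h| = |C_X(h)|`. An element of order `4` of `PSL(2, q)` lifts to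
a matrix of trace `±√2`, whose centralizer in `SL(2, q)` is parametrized by a conic with `q ± 1`
points, so `|Fix h| ≤ (q + 1) / 8`.

The set `S` of the points other than `α` fixed by some element of order `4` of `X_α` is invariant
under `G_α`. Flag-transitivity makes all blocks through `α` meet `S` in equally many points, so
`r` divides `3 |S| ≤ 9 (q - 7) / 8`. As `k ≤ r` by Fisher's inequality, `r (k - 1) = 3 (v - 1)`
bounds `v` by a quadratic polynomial in `q`, whereas `48 v = q (q² - 1)`; hence `q < 11`.

The remaining parameters force `k = 3` and `r` odd. The orbits of `X_α` on the blocks through `α`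
have odd length dividing `24`, hence at most `3`, so `h²` fixes every block through `α`. As `k = 3`,
it fixes every point, contradicting faithfulness.
-/

open scoped Pointwise
open Matrix

namespace FT

variable {Pt : Type*}

/-- `IsDesign 𝓑 k lam` says that the family `𝓑` of subsets of the point set `Pt` is the
block set of a `2-(v, k, lam)` design: every block has `k` points and any two distinct
points lie on exactly `lam` common blocks. -/
structure IsDesign (𝓑 : Set (Set Pt)) (k lam : ℕ) : Prop where
  block_card : ∀ B ∈ 𝓑, Nat.card B = k
  pair_count : ∀ x y : Pt, x ≠ y → Nat.card {B : Set Pt | B ∈ 𝓑 ∧ x ∈ B ∧ y ∈ B} = lam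

/-- The group `G` acts on the design with point set `Pt` and block set `𝓑` as a group of
automorphisms. -/
def ActsOn (G : Type*) [Group G] [MulAction G Pt] (𝓑 : Set (Set Pt)) : Prop :=
  ∀ (g : G), ∀ B ∈ 𝓑, g • B ∈ 𝓑

/-- The group `G` is transitive on the flags (incident point-block pairs) of the design. -/
def FlagTransitive (G : Type*) [Group G] [MulAction G Pt] (𝓑 : Set (Set Pt)) : Prop :=
  ∀ B ∈ 𝓑, ∀ C ∈ 𝓑, ∀ x ∈ B, ∀ y ∈ C, ∃ g : G, g • B = C ∧ g • x = y

/-- The action of `G` on `Pt` is primitive: it is transitive and every block of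
imprimitivity is trivial. -/
def PointPrimitive (G : Type*) [Group G] (Pt : Type*) [MulAction G Pt] : Prop :=
  MulAction.IsPretransitive G Pt ∧
    ∀ s : Set Pt, MulAction.IsBlock G s → s.Subsingleton ∨ s = Set.univ

/-- The number of blocks of `𝓑` through the point `x` (the replication number, for a
flag-transitive design). -/
noncomputable def repNum (𝓑 : Set (Set Pt)) (x : Pt) : ℕ :=
  Nat.card {B : Set Pt | B ∈ 𝓑 ∧ x ∈ B}

/-- The projective general linear group `PGL(2,K)`, as the quotient of `GL(2,K)` by its
center. -/
abbrev PGL2 (K : Type*) [Field K] :=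
  GL (Fin 2) K ⧸ Subgroup.center (GL (Fin 2) K)

/-- The projective special linear group `PSL(2,K)`. -/
abbrev PSL2 (K : Type*) [Field K] := Matrix.ProjectiveSpecialLinearGroup (Fin 2) K

end FT

open FT

namespace FT

section Conic

variable {F : Type*} [Field F] {t : F}

/-- The affine conic `x² + txy + y² = 1`, which parametrizes the centralizer in `SL(2, F)` of a
matrix of trace `t`. -/
def conic (t : F) : Set (F × F) :=
  {z | z.1 ^ 2 + t * z.1 * z.2 + z.2 ^ 2 = 1}

/-- The second intersection of `conic t` with the line `x = 1 + my` through `(1, 0)`;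
meaningful when `m ^ 2 + t * m + 1 ≠ 0`. -/
def conicPoint (t m : F) : F × F :=
  let y := -(2 * m + t) / (m ^ 2 + t * m + 1)
  (1 + m * y, y)

lemma conicPoint_mem_conic {m : F} (hm : m ^ 2 + t * m + 1 ≠ 0) : conicPoint t m ∈ conic t := by
  set y := (conicPoint t m).2
  have hline : y * (m ^ 2 + t * m + 1) = -(2 * m + t) := div_mul_cancel₀ _ hm
  change (1 + m * y) ^ 2 + t * (1 + m * y) * y + y ^ 2 = 1
  linear_combination y * hline

lemma conicPoint_snd_eq_zero_iff {m : F} (hm : m ^ 2 + t * m + 1 ≠ 0) :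
    (conicPoint t m).2 = 0 ↔ 2 * m + t = 0 := by
  simp only [conicPoint, div_eq_zero_iff, neg_eq_zero, hm, or_false]

lemma injOn_conicPoint (h2 : (2 : F) ≠ 0) :
    Set.InjOn (conicPoint t) {m | m ^ 2 + t * m + 1 = 0}ᶜ := by
  intro m hm m' hm' h
  by_cases hy : (conicPoint t m).2 = 0
  · have htangent := (conicPoint_snd_eq_zero_iff hm).1 hy
    have htangent' := (conicPoint_snd_eq_zero_iff hm').1 (h ▸ hy)
    exact mul_left_cancel₀ h2 (by linear_combination htangent - htangent')
  · obtain ⟨hx, hy'⟩ := Prod.ext_iff.1 h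
    have hx : 1 + m * (conicPoint t m).2 = 1 + m' * (conicPoint t m').2 := hx
    rw [← hy'] at hx
    exact mul_right_cancel₀ hy (add_left_cancel hx)

lemma two_mul_add_ne_zero_of_isRoot (ht : t ^ 2 ≠ 4) {m : F} (hm : m ^ 2 + t * m + 1 = 0) :
    2 * m + t ≠ 0 := fun h => ht (by linear_combination (2 * m + t) * h - 4 * hm)

lemma exists_conicPoint_eq (h2 : (2 : F) ≠ 0) (ht : t ^ 2 ≠ 4) {z : F × F}
    (hz : z ∈ conic t) (hne : z ≠ (-1, 0)) :
    ∃ m, m ^ 2 + t * m + 1 ≠ 0 ∧ conicPoint t m = z := by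
  obtain ⟨x, y⟩ := z
  have hz : x ^ 2 + t * x * y + y ^ 2 = 1 := hz
  rcases eq_or_ne y 0 with rfl | hy
  · have hx : (x - 1) * (x + 1) = 0 := by linear_combination hz
    have hx1 : x + 1 ≠ 0 := fun h => hne (by rw [eq_neg_of_add_eq_zero_left h])
    obtain rfl : x = 1 := sub_eq_zero.1 ((mul_eq_zero.1 hx).resolve_right hx1)
    have hm : 2 * (-t / 2) + t = 0 := by field_simp; ring
    exact ⟨-t / 2, fun h => two_mul_add_ne_zero_of_isRoot ht h hm, by simp [conicPoint, hm]⟩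
  · obtain ⟨m, hm⟩ : ∃ m, x = 1 + m * y := ⟨(x - 1) / y, by field_simp; ring⟩
    have hline : y * (m ^ 2 + t * m + 1) = -(2 * m + t) :=
      mul_left_cancel₀ hy (by rw [hm] at hz; linear_combination hz)
    have hroot : m ^ 2 + t * m + 1 ≠ 0 := fun h =>
      two_mul_add_ne_zero_of_isRoot ht h (by linear_combination hline - y * h)
    have hy' : -(2 * m + t) / (m ^ 2 + t * m + 1) = y := by
      rw [← hline, mul_div_cancel_right₀ _ hroot]
    exact ⟨m, hroot, by simp only [conicPoint, hy', hm]⟩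

/-- Projection from `(1, 0)`: the slopes that are not roots correspond to the points of the conic
other than `(-1, 0)`. -/
lemma ncard_conic_add_ncard_roots [Finite F] (h2 : (2 : F) ≠ 0) (ht : t ^ 2 ≠ 4) :
    (conic t).ncard + {m : F | m ^ 2 + t * m + 1 = 0}.ncard = Nat.card F + 1 := by
  have hconic : conic t = insert (-1, 0) (conicPoint t '' {m | m ^ 2 + t * m + 1 = 0}ᶜ) := by
    refine Set.Subset.antisymm (fun z hz => or_iff_not_imp_left.2 fun hne =>
      exists_conicPoint_eq h2 ht hz hne) (Set.insert_subset (by simp [conic]) ?_)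
    rintro _ ⟨m, hm, rfl⟩
    exact conicPoint_mem_conic hm
  have hnotMem : (-1, 0) ∉ conicPoint t '' {m | m ^ 2 + t * m + 1 = 0}ᶜ := by
    rintro ⟨m, -, h⟩
    obtain ⟨hx, hy⟩ := Prod.ext_iff.1 h
    have hx : 1 + m * (conicPoint t m).2 = -1 := hx
    rw [hy] at hx
    exact h2 (by linear_combination hx)
  have hcompl := Set.ncard_add_ncard_compl {m : F | m ^ 2 + t * m + 1 = 0}
  rw [hconic, Set.ncard_insert_of_notMem hnotMem, (injOn_conicPoint h2).ncard_image]
  omega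

lemma ncard_roots_le_two (t : F) : {m : F | m ^ 2 + t * m + 1 = 0}.ncard ≤ 2 := by
  rcases Set.eq_empty_or_nonempty {m : F | m ^ 2 + t * m + 1 = 0} with h | ⟨m₀, hm₀⟩
  · simp [h]
  · have hsub : {m : F | m ^ 2 + t * m + 1 = 0} ⊆ {m₀, -t - m₀} := fun m hm => by
      have hm₀ : m₀ ^ 2 + t * m₀ + 1 = 0 := hm₀
      have hm : m ^ 2 + t * m + 1 = 0 := hm
      have hvieta : (m - m₀) * (m - (-t - m₀)) = 0 := by linear_combination hm - hm₀
      simpa only [Set.mem_insert_iff, Set.mem_singleton_iff, mul_eq_zero, sub_eq_zero]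
        using hvieta
    exact (Set.ncard_le_ncard hsub).trans
      ((Set.ncard_insert_le _ _).trans_eq (by rw [Set.ncard_singleton]))

end Conic

section Matrix

variable {R : Type*} [CommRing R] {F : Type*} [Field F]

lemma sq_eq_trace_smul_sub_det_smul_one (A : Matrix (Fin 2) (Fin 2) R) :
    A ^ 2 = A.trace • A - A.det • (1 : Matrix (Fin 2) (Fin 2) R) := by
  ext i j
  fin_cases i <;> fin_cases j <;>
    simp [pow_two, Matrix.mul_apply, trace_fin_two, det_fin_two] <;> ring

lemma det_smul_one_add_smul (A : Matrix (Fin 2) (Fin 2) R) (x y : R) :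
    (x • (1 : Matrix (Fin 2) (Fin 2) R) + y • A).det = x ^ 2 + A.trace * x * y + A.det * y ^ 2 := by
  simp [det_fin_two, trace_fin_two]
  ring

lemma trace_sq_fin_two (A : Matrix (Fin 2) (Fin 2) R) :
    (A ^ 2).trace = A.trace ^ 2 - 2 * A.det := by
  rw [sq_eq_trace_smul_sub_det_smul_one]
  simp [pow_two, mul_comm]

lemma smul_one_mem_range_scalar (c : R) :
    c • (1 : Matrix (Fin 2) (Fin 2) R) ∈ Set.range (scalar (Fin 2)) :=
  ⟨c, by rw [scalar_apply, smul_one_eq_diagonal]⟩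

lemma trace_eq_zero_of_sq_mem_range_scalar {A : Matrix (Fin 2) (Fin 2) F}
    (hA : A ∉ Set.range (scalar (Fin 2))) (hsq : A ^ 2 ∈ Set.range (scalar (Fin 2))) :
    A.trace = 0 := by
  obtain ⟨c, hc⟩ := hsq
  by_contra ht
  refine hA ⟨A.trace⁻¹ * (c + A.det), ?_⟩
  have htA : A.trace • A = (c + A.det) • (1 : Matrix (Fin 2) (Fin 2) F) := by
    rw [add_smul, smul_one_eq_diagonal c, ← scalar_apply, hc, sq_eq_trace_smul_sub_det_smul_one,
      sub_add_cancel]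
  rw [scalar_apply, ← smul_one_eq_diagonal, mul_smul, ← htA, inv_smul_smul₀ ht]

/-- The vectors `(a₀₁, a₁₀, a₀₀ - a₁₁)` and `(b₀₁, b₁₀, b₀₀ - b₁₁)` have cross product zero,
hence are parallel, and the first one vanishes only for scalar `A`. -/
lemma exists_eq_smul_one_add_smul_of_commute {A B : Matrix (Fin 2) (Fin 2) F}
    (hA : A ∉ Set.range (scalar (Fin 2))) (h : Commute A B) :
    ∃ x y : F, B = x • (1 : Matrix (Fin 2) (Fin 2) F) + y • A := by
  let u (M : Matrix (Fin 2) (Fin 2) F) : Fin 3 → F := ![M 0 1, M 1 0, M 0 0 - M 1 1]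
  have hu : u A ≠ 0 := fun h0 => hA ⟨A 0 0, by
    have h01 : A 0 1 = 0 := congrFun h0 0
    have h10 : A 1 0 = 0 := congrFun h0 1
    have h00 : A 0 0 - A 1 1 = 0 := congrFun h0 2
    ext i j
    fin_cases i <;> fin_cases j <;> simp [h01, h10, sub_eq_zero.1 h00]⟩
  have hcross : crossProduct (u A) (u B) = 0 := by
    have hentry (i j : Fin 2) : (A * B) i j = (B * A) i j := by rw [h.eq]
    simp only [Matrix.mul_apply, Fin.sum_univ_two] at hentry
    rw [cross_apply]
    ext i
    fin_cases i <;> simp [u]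
    · linear_combination hentry 1 0
    · linear_combination hentry 0 1
    · linear_combination hentry 0 0
  have hparallel : ¬ LinearIndependent F ![u A, u B] := fun hli =>
    crossProduct_ne_zero_iff_linearIndependent.2 hli hcross
  rw [LinearIndependent.pair_iff' hu] at hparallel
  push Not at hparallel
  obtain ⟨y, hy⟩ := hparallel
  have h01 : y * A 0 1 = B 0 1 := congrFun hy 0
  have h10 : y * A 1 0 = B 1 0 := congrFun hy 1
  have h00 : y * (A 0 0 - A 1 1) = B 0 0 - B 1 1 := congrFun hy 2
  refine ⟨B 0 0 - y * A 0 0, y, ?_⟩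
  ext i j
  fin_cases i <;> fin_cases j <;> simp [h01, h10]
  linear_combination h00

lemma commute_smul_one_add_smul (A : Matrix (Fin 2) (Fin 2) R) (x y : R) :
    Commute A (x • (1 : Matrix (Fin 2) (Fin 2) R) + y • A) :=
  ((Commute.one_right A).smul_right x).add_right ((Commute.refl A).smul_right y)

lemma smul_one_add_smul_injective {A : Matrix (Fin 2) (Fin 2) F}
    (hA : A ∉ Set.range (scalar (Fin 2))) :
    Function.Injective fun z : F × F => z.1 • (1 : Matrix (Fin 2) (Fin 2) F) + z.2 • A := by
  have hli : LinearIndependent F ![(1 : Matrix (Fin 2) (Fin 2) F), A] := by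
    rw [LinearIndependent.pair_iff' one_ne_zero]
    exact fun c hc => hA (hc ▸ smul_one_mem_range_scalar c)
  exact fun z w h => Prod.ext_iff.2 (hli.eq_of_pair h)

end Matrix

section SpecialLinear

variable {n F : Type*} [Fintype n] [DecidableEq n] [Field F]

lemma mk_eq_one_iff {A : Matrix.SpecialLinearGroup n F} :
    (A : Matrix.ProjectiveSpecialLinearGroup n F) = 1 ↔
      (A : Matrix n n F) ∈ Set.range (scalar n) := by
  rw [QuotientGroup.eq_one_iff, Matrix.SpecialLinearGroup.mem_center_iff]
  constructor
  · rintro ⟨r, -, h⟩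
    exact ⟨r, h⟩
  · rintro ⟨r, h⟩
    have hdet := A.2
    rw [← h, scalar_apply, det_diagonal, Finset.prod_const, Finset.card_univ] at hdet
    exact ⟨r, hdet, h⟩

/-- If `BAB⁻¹ = cA`, comparing traces forces `c = 1`. -/
lemma mul_comm_of_mk_mul_comm {A B : Matrix.SpecialLinearGroup n F}
    (hA : (A : Matrix n n F).trace ≠ 0)
    (h : (B : Matrix.ProjectiveSpecialLinearGroup n F) * A = A * B) : B * A = A * B := by
  let toMatrix := Matrix.SpecialLinearGroup.coeMonoidHom (ι := n) (R := F)
  have hone : ((B * A * B⁻¹ * A⁻¹ : Matrix.SpecialLinearGroup n F) :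
      Matrix.ProjectiveSpecialLinearGroup n F) = 1 := by
    rw [QuotientGroup.mk_mul, QuotientGroup.mk_mul, QuotientGroup.mk_mul, h]
    simp
  obtain ⟨c, hc⟩ := mk_eq_one_iff.1 hone
  have hconj : toMatrix (B * A * B⁻¹) = c • toMatrix A := by
    rw [← smul_one_mul, smul_one_eq_diagonal, ← scalar_apply, hc]
    exact congrArg toMatrix (inv_mul_cancel_right (B * A * B⁻¹) A).symm
  have htrace : (toMatrix (B * A * B⁻¹)).trace = (toMatrix A).trace := by
    rw [map_mul, trace_mul_comm, ← map_mul, inv_mul_cancel_left]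
  rw [hconj, trace_smul, smul_eq_mul] at htrace
  rw [(mul_eq_right₀ hA).1 htrace, one_smul] at hconj
  exact mul_inv_eq_iff_eq_mul.1 (Matrix.SpecialLinearGroup.coeMonoidHom_injective hconj)

lemma card_centralizer_mk {A : Matrix.SpecialLinearGroup n F} (hA : (A : Matrix n n F).trace ≠ 0) :
    Nat.card (Subgroup.center (Matrix.SpecialLinearGroup n F)) *
      Nat.card (Subgroup.centralizer {(A : Matrix.ProjectiveSpecialLinearGroup n F)}) =
      Nat.card (Subgroup.centralizer {A}) := by
  refine (QuotientGroup.card_preimage_mk (Subgroup.center _) _).symm.trans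
    (Nat.card_congr (Equiv.subtypeEquivRight fun B => ?_))
  simp only [Set.mem_preimage, SetLike.mem_coe, Subgroup.mem_centralizer_singleton_iff]
  exact ⟨mul_comm_of_mk_mul_comm hA, congrArg _⟩

lemma range_toGL :
    (Matrix.SpecialLinearGroup.toGL (n := n) (R := F)).range = GeneralLinearGroup.det.ker := by
  ext B
  constructor
  · rintro ⟨A, rfl⟩
    exact Units.ext A.2
  · exact fun hB => ⟨⟨B.1, congrArg Units.val hB⟩, Units.ext rfl⟩

lemma card_specialLinearGroup_mul_card_units [Nonempty n] :
    Nat.card (Matrix.SpecialLinearGroup n F) * Nat.card Fˣ = Nat.card (GL n F) := by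
  rw [← Subgroup.card_mul_index (GeneralLinearGroup.det (n := n) (R := F)).ker, Subgroup.index_ker,
    MonoidHom.range_eq_top.2 GeneralLinearGroup.det_surjective, Subgroup.card_top, ← range_toGL,
    Nat.card_congr (MonoidHom.ofInjective Matrix.SpecialLinearGroup.toGL_injective).toEquiv]

end SpecialLinear

lemma orderOf_eq_four_iff {G : Type*} [Group G] {g : G} :
    orderOf g = 4 ↔ g ^ 4 = 1 ∧ g ^ 2 ≠ 1 := by
  constructor
  · intro h
    exact ⟨h ▸ pow_orderOf_eq_one g, pow_ne_one_of_lt_orderOf two_ne_zero (by omega)⟩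
  · rintro ⟨h4, h2⟩
    exact orderOf_eq_prime_pow (p := 2) (n := 1) h2 h4

section ProjectiveSpecialLinearTwo

open scoped MatrixGroups

variable {F : Type*} [Field F]

local notation:1024 "↑ₘ" A:1024 => ((A : SL(2, F)) : Matrix (Fin 2) (Fin 2) F)

lemma card_centralizer_eq_ncard_conic {A : SL(2, F)}
    (hA : ↑ₘA ∉ Set.range (scalar (Fin 2))) :
    Nat.card (Subgroup.centralizer {A}) = (conic (↑ₘA).trace).ncard := by
  have hdet (x y : F) : (x • (1 : Matrix (Fin 2) (Fin 2) F) + y • ↑ₘA).det =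
      x ^ 2 + (↑ₘA).trace * x * y + y ^ 2 := by
    rw [det_smul_one_add_smul, A.2, one_mul]
  have himage : Matrix.SpecialLinearGroup.coeMonoidHom ''
        (Subgroup.centralizer {A} : Set SL(2, F)) =
      (fun z : F × F => z.1 • (1 : Matrix (Fin 2) (Fin 2) F) + z.2 • ↑ₘA) '' conic (↑ₘA).trace := by
    ext B
    constructor
    · rintro ⟨B, hB, rfl⟩
      have hcomm : Commute A B := (Subgroup.mem_centralizer_singleton_iff.1 hB).symm
      obtain ⟨x, y, hxy⟩ := exists_eq_smul_one_add_smul_of_commute hA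
        (hcomm.map Matrix.SpecialLinearGroup.coeMonoidHom)
      exact ⟨(x, y), (hdet x y).symm.trans (hxy ▸ B.2), hxy.symm⟩
    · rintro ⟨⟨x, y⟩, hz, rfl⟩
      have hcomm := commute_smul_one_add_smul ↑ₘA x y
      exact ⟨⟨_, (hdet x y).trans hz⟩,
        Subgroup.mem_centralizer_singleton_iff.2 (Subtype.ext hcomm.symm.eq), rfl⟩
  have hcard := congrArg Set.ncard himage
  rwa [Set.ncard_image_of_injective _ (smul_one_add_smul_injective hA),
    Set.ncard_image_of_injective _ Matrix.SpecialLinearGroup.coeMonoidHom_injective] at hcard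

lemma card_center_specialLinearGroup_fin_two (h2 : (2 : F) ≠ 0) :
    Nat.card (Subgroup.center SL(2, F)) = 2 := by
  rw [Nat.card_congr (Matrix.SpecialLinearGroup.center_equiv_rootsOfUnity' (0 : Fin 2)).toEquiv,
    Fintype.card_fin]
  refine (IsPrimitiveRoot.neg_one (R := F) (ringChar F) fun h => h2 ?_).card_rootsOfUnity
  exact_mod_cast h ▸ ringChar.Nat.cast_ringChar (R := F)

lemma card_specialLinearGroup_fin_two [Finite F] :
    Nat.card SL(2, F) = Nat.card F * (Nat.card F ^ 2 - 1) := by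
  have := Fintype.ofFinite F
  have hmul := card_specialLinearGroup_mul_card_units (n := Fin 2) (F := F)
  rw [Matrix.card_GL_field, Fin.prod_univ_two, Nat.card_units, ← Nat.card_eq_fintype_card] at hmul
  have hpos : 0 < Nat.card F - 1 := Nat.sub_pos_of_lt Finite.one_lt_card
  refine Nat.eq_of_mul_eq_mul_right hpos (hmul.trans ?_)
  rw [Fin.val_zero, Fin.val_one, pow_zero, pow_one, pow_two (Nat.card F), ← Nat.mul_sub_one]
  ring

lemma two_mul_card_PSL2 [Finite F] (h2 : (2 : F) ≠ 0) :
    2 * Nat.card (PSL2 F) = Nat.card F * (Nat.card F ^ 2 - 1) := by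
  rw [← card_specialLinearGroup_fin_two, Subgroup.card_eq_card_quotient_mul_card_subgroup
    (Subgroup.center SL(2, F)), card_center_specialLinearGroup_fin_two h2, mul_comm]

lemma trace_sq_eq_two_of_orderOf_mk_eq_four {A : SL(2, F)}
    (hA : orderOf (A : PSL2 F) = 4) : (↑ₘA).trace ^ 2 = 2 := by
  obtain ⟨h4, h2⟩ := orderOf_eq_four_iff.1 hA
  have h2' : ↑ₘ(A ^ 2) ∉ Set.range (scalar (Fin 2)) := fun h => h2 (mk_eq_one_iff.2 h)
  have h4' : ↑ₘ(A ^ 2) ^ 2 ∈ Set.range (scalar (Fin 2)) := by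
    rw [← Matrix.SpecialLinearGroup.coe_pow, ← pow_mul]
    exact mk_eq_one_iff.1 h4
  have htrace := trace_eq_zero_of_sq_mem_range_scalar h2' h4'
  rw [Matrix.SpecialLinearGroup.coe_pow, trace_sq_fin_two, A.2, mul_one] at htrace
  exact sub_eq_zero.1 htrace

lemma two_ne_zero_of_orderOf_eq_four {g : PSL2 F} (hg : orderOf g = 4) : (2 : F) ≠ 0 := by
  obtain ⟨A, rfl⟩ : ∃ A : SL(2, F), (A : PSL2 F) = g := QuotientGroup.mk_surjective g
  intro h2
  have htrace : (↑ₘA).trace = 0 :=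
    pow_eq_zero_iff two_ne_zero |>.1 ((trace_sq_eq_two_of_orderOf_mk_eq_four hg).trans h2)
  refine (orderOf_eq_four_iff.1 hg).2 (mk_eq_one_iff.2 ?_)
  rw [Matrix.SpecialLinearGroup.coe_pow, sq_eq_trace_smul_sub_det_smul_one, htrace, zero_smul,
    zero_sub, ← neg_smul]
  exact smul_one_mem_range_scalar _

/-- The preimage of `C(g)` in `SL(2, F)` is parametrized by a conic of trace `±√2`, which has
`q ± 1` points. -/
lemma card_centralizer_of_orderOf_eq_four [Finite F] {g : PSL2 F} (hg : orderOf g = 4) :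
    2 * Nat.card (Subgroup.centralizer {g}) ≤ Nat.card F + 1 ∧
      Nat.card F ≤ 2 * Nat.card (Subgroup.centralizer {g}) + 1 := by
  obtain ⟨A, rfl⟩ : ∃ A : SL(2, F), (A : PSL2 F) = g := QuotientGroup.mk_surjective g
  have h2 := two_ne_zero_of_orderOf_eq_four hg
  have ht2 := trace_sq_eq_two_of_orderOf_mk_eq_four hg
  have ht0 : (↑ₘA).trace ≠ 0 := fun h => h2 (by rw [← ht2, h, zero_pow two_ne_zero])
  have ht4 : (↑ₘA).trace ^ 2 ≠ 4 := fun h => h2 (by linear_combination ht2 - h)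
  have hA : ↑ₘA ∉ Set.range (scalar (Fin 2)) := fun h => by
    have hone := mk_eq_one_iff.2 h
    rw [hone, orderOf_one] at hg
    omega
  have hlift : 2 * Nat.card (Subgroup.centralizer (G := PSL2 F) {↑A}) =
      (conic (↑ₘA).trace).ncard := by
    rw [← card_centralizer_eq_ncard_conic hA, ← card_centralizer_mk ht0,
      card_center_specialLinearGroup_fin_two h2]
  have hconic := ncard_conic_add_ncard_roots h2 ht4
  have hroots := ncard_roots_le_two (↑ₘA).trace
  omega

end ProjectiveSpecialLinearTwo

section FixedPoints

open MulAction

lemma ncard_setOf_smul_mem {G P : Type*} [Group G] [MulAction G P] {x : P} {T : Set P}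
    (hT : T ⊆ orbit G x) :
    {g : G | g • x ∈ T}.ncard = Nat.card (stabilizer G x) * T.ncard := by
  have hrange : T ⊆ Set.range (ofQuotientStabilizer G x) := fun y hy => by
    obtain ⟨g, rfl⟩ := hT hy
    exact ⟨g, ofQuotientStabilizer_mk G x g⟩
  rw [← Set.ncard_preimage_of_injective_subset_range (injective_ofQuotientStabilizer G x) hrange]
  exact QuotientGroup.card_preimage_mk (stabilizer G x) (ofQuotientStabilizer G x ⁻¹' T)

/-- Both sides count the `g` such that `h` fixes `g • x`, that is, such that `g⁻¹ * h * g` fixes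
`x`. -/
lemma card_stabilizer_mul_ncard_fixedBy {G P : Type*} [Group G] [MulAction G P]
    [IsPretransitive G P] (x : P) (h : G) :
    Nat.card (stabilizer G x) * (fixedBy P h).ncard =
      Nat.card (Subgroup.centralizer {h}) * {s | s ∈ stabilizer G x ∧ IsConj h s}.ncard := by
  have hconj : {s | s ∈ stabilizer G x ∧ IsConj h s} ⊆ orbit (ConjAct G) h :=
    fun s hs => ConjAct.mem_orbit_conjAct.2 hs.2.symm
  rw [← ncard_setOf_smul_mem fun y _ => exists_smul_eq G x y,
    Subgroup.nat_card_centralizer_nat_card_stabilizer, ← ncard_setOf_smul_mem hconj]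
  refine Nat.card_congr (((Equiv.inv G).trans ConjAct.toConjAct.toEquiv).subtypeEquiv fun g => ?_)
  have hsmul : ConjAct.toConjAct g⁻¹ • h = g⁻¹ * h * g := by
    rw [ConjAct.toConjAct_smul, inv_inv]
  have hIsConj : IsConj h (g⁻¹ * h * g) := isConj_iff.2 ⟨g⁻¹, by rw [inv_inv]⟩
  change h • g • x = g • x ↔ ConjAct.toConjAct g⁻¹ • h ∈ stabilizer G x ∧
    IsConj h (ConjAct.toConjAct g⁻¹ • h)
  rw [hsmul, and_iff_left hIsConj, mem_stabilizer_iff, mul_smul, mul_smul, inv_smul_eq_iff]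

lemma card_stabilizer_mul_ncard_fixedBy_of_isConj {G P : Type*} [Group G] [MulAction G P]
    [IsPretransitive G P] {x : P} {h : stabilizer G x}
    (hconj : ∀ s : stabilizer G x, orderOf s = orderOf h → IsConj h s) :
    Nat.card (stabilizer G x) * (fixedBy P (h : G)).ncard =
      Nat.card (Subgroup.centralizer {(h : G)}) *
        {s : stabilizer G x | orderOf s = orderOf h}.ncard := by
  rw [card_stabilizer_mul_ncard_fixedBy,
    ← Set.ncard_image_of_injective _ (Subtype.val_injective (p := (· ∈ stabilizer G x)))]
  congr 2
  ext s
  constructor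
  · rintro ⟨hs, hhs⟩
    refine ⟨⟨s, hs⟩, ?_, rfl⟩
    obtain ⟨c, rfl⟩ := isConj_iff.1 hhs
    rw [Set.mem_ofPred_eq, ← Subgroup.orderOf_coe, ← Subgroup.orderOf_coe]
    exact (MulAut.conj c).orderOf_eq _
  · rintro ⟨s, hs, rfl⟩
    exact ⟨s.2, (stabilizer G x).subtype.map_isConj (hconj s hs)⟩

/-- The points other than `x` that are fixed by some element of order `n` of the stabilizer of
`x`. When `G` is normal in a larger group, this set is invariant under the stabilizer of `x` in the
larger group. -/
def fixedPointsOfOrder (G : Type*) {P : Type*} [Group G] [MulAction G P] (n : ℕ) (x : P) : Set P :=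
  {y | y ≠ x ∧ ∃ s : stabilizer G x, orderOf s = n ∧ (s : G) • y = y}

lemma notMem_fixedPointsOfOrder {G P : Type*} [Group G] [MulAction G P] (n : ℕ) (x : P) :
    x ∉ fixedPointsOfOrder G n x := fun h => h.1 rfl

lemma smul_mem_fixedPointsOfOrder {G P : Type*} [Group G] [MulAction G P] {N : Subgroup G}
    (hN : N.Normal) {n : ℕ} {x : P} {g : G} (hg : g ∈ stabilizer G x) {y : P}
    (hy : y ∈ fixedPointsOfOrder N n x) : g • y ∈ fixedPointsOfOrder N n x := by
  obtain ⟨hne, s, hs, hfix⟩ := hy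
  have hfix : ((s : N) : G) • y = y := hfix
  have hsx : ((s : N) : G) • x = x := s.2
  have hgx : g⁻¹ • x = x := inv_mem hg
  let t : N := ⟨g * s * g⁻¹, hN.conj_mem _ s.1.2 g⟩
  have htx : t ∈ stabilizer N x := by
    change (g * s * g⁻¹) • x = x
    rw [mul_smul, mul_smul, hgx, hsx, hg]
  refine ⟨fun h => hne ((smul_left_cancel g) (h.trans hg.symm)), ⟨t, htx⟩, ?_, ?_⟩
  · rw [← hs, ← Subgroup.orderOf_coe s, ← Subgroup.orderOf_coe (s : N), ← Subgroup.orderOf_coe,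
      ← Subgroup.orderOf_coe]
    exact (MulAut.conj g).orderOf_eq _
  · change (g * s * g⁻¹) • g • y = g • y
    rw [mul_smul, mul_smul, inv_smul_smul, hfix]

/-- If `s` fixes `y` then so does `s⁻¹ ≠ s`, so every point is counted at least twice. -/
lemma two_mul_ncard_fixedPointsOfOrder_le {G P : Type*} [Group G] [MulAction G P] [Finite P]
    {x : P} [Finite (stabilizer G x)] {n m : ℕ} (hn : 2 < n)
    (hm : ∀ s : stabilizer G x, orderOf s = n → (fixedBy P (s : G)).ncard ≤ m + 1) :
    2 * (fixedPointsOfOrder G n x).ncard ≤ {s : stabilizer G x | orderOf s = n}.ncard * m := by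
  classical
  have := Fintype.ofFinite P
  have := Fintype.ofFinite (stabilizer G x)
  rw [Set.ncard_eq_toFinset_card', Set.ncard_eq_toFinset_card', mul_comm]
  refine Finset.card_mul_le_card_mul (fun y (s : stabilizer G x) => (s : G) • y = y)
    (fun y hy => ?_) (fun s hs => ?_)
  · obtain ⟨-, s, hs, hfix⟩ := Set.mem_toFinset.1 hy
    have hne : s ≠ s⁻¹ := fun h => by
      have : s ^ 2 = 1 := by rw [pow_two]; nth_rw 2 [h]; exact mul_inv_cancel s
      have := Nat.le_of_dvd two_pos (orderOf_dvd_of_pow_eq_one this)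
      omega
    rw [← Finset.card_pair hne]
    refine Finset.card_le_card fun u hu => ?_
    rcases Finset.mem_insert.1 hu with rfl | hu
    · simpa [Finset.bipartiteAbove, hs] using hfix
    · obtain rfl := Finset.mem_singleton.1 hu
      simpa [Finset.bipartiteAbove, hs, inv_smul_eq_iff] using hfix.symm
  · have hsx : x ∈ fixedBy P (s : G) := s.2
    have hsub : ((fixedPointsOfOrder G n x).toFinset.bipartiteBelow
        (fun y (s : stabilizer G x) => (s : G) • y = y) s : Set P) ⊆ fixedBy P (s : G) \ {x} := by
      intro y hy
      obtain ⟨hy, hfix⟩ := Finset.mem_filter.1 hy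
      exact ⟨hfix, (Set.mem_toFinset.1 hy).1⟩
    have hle := Set.ncard_le_ncard hsub
    rw [Set.ncard_coe_finset, Set.ncard_sdiff_singleton_of_mem hsx] at hle
    have hs : s ∈ {s : stabilizer G x | orderOf s = n} := Set.mem_toFinset.1 hs
    have := hm s hs
    omega

end FixedPoints

section SymmetricGroup

open Equiv

lemma ncard_orderOf_eq_four_perm_fin_four : {s : Perm (Fin 4) | orderOf s = 4}.ncard = 6 := by
  simp only [orderOf_eq_four_iff]
  rw [Set.ncard_eq_toFinset_card']
  decide +kernel

lemma isConj_perm_fin_four {s t : Perm (Fin 4)} (hs : orderOf s = 4) (ht : orderOf t = 4) :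
    IsConj s t := by
  rw [orderOf_eq_four_iff] at hs ht
  revert s t
  simp only [isConj_iff]
  decide +kernel

lemma card_perm_fin_four : Nat.card (Perm (Fin 4)) = 24 := by
  rw [Nat.card_eq_fintype_card, Fintype.card_perm, Fintype.card_fin]
  rfl

lemma ncard_orderOf_eq_four_of_mulEquiv {S : Type*} [Group S] (e : S ≃* Perm (Fin 4)) :
    {s : S | orderOf s = 4}.ncard = 6 := by
  rw [← ncard_orderOf_eq_four_perm_fin_four, ← Set.ncard_preimage_of_injective_subset_range
    e.injective (e.surjective.range_eq ▸ Set.subset_univ _)]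
  simp only [Set.preimage_ofPred_eq, MulEquiv.orderOf_eq]

lemma exists_orderOf_eq_four_of_mulEquiv {S : Type*} [Group S] (e : S ≃* Perm (Fin 4)) :
    ∃ s : S, orderOf s = 4 :=
  Set.nonempty_of_ncard_ne_zero (ncard_orderOf_eq_four_of_mulEquiv e ▸ by norm_num)

lemma isConj_of_mulEquiv_perm_fin_four {S : Type*} [Group S] (e : S ≃* Perm (Fin 4)) {s t : S}
    (hs : orderOf s = 4) (ht : orderOf t = 4) : IsConj s t := by
  have h := isConj_perm_fin_four ((e.orderOf_eq s).trans hs) ((e.orderOf_eq t).trans ht)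
  simpa using e.symm.toMonoidHom.map_isConj h

open MulAction in
lemma four_mul_ncard_fixedBy {G P : Type*} [Group G] [MulAction G P] [IsPretransitive G P] {x : P}
    (e : stabilizer G x ≃* Perm (Fin 4)) {h : stabilizer G x} (hh : orderOf h = 4) :
    4 * (fixedBy P (h : G)).ncard = Nat.card (Subgroup.centralizer {(h : G)}) := by
  have hcount := card_stabilizer_mul_ncard_fixedBy_of_isConj fun s hs =>
    isConj_of_mulEquiv_perm_fin_four e hh (hs.trans hh)
  rw [hh, ncard_orderOf_eq_four_of_mulEquiv e, Nat.card_congr e.toEquiv, card_perm_fin_four]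
    at hcount
  omega

end SymmetricGroup

section Subgroup

variable {G : Type*} [Group G] {K : Subgroup G}

open MulAction in
/-- The orbit of the coset `K` under the normal subgroup `N` is a block of imprimitivity. -/
lemma relIndex_dvd_index_of_normal_right (N : Subgroup G) [N.Normal] : K.relIndex N ∣ K.index := by
  have hstab : stabilizer N ((1 : G) : G ⧸ K) = K.subgroupOf N := by
    ext n
    rw [Subgroup.mem_subgroupOf, mem_stabilizer_iff, eq_comm]
    exact QuotientGroup.eq.trans (by simp)
  have hdvd := (IsBlock.orbit_of_normal (N := N) ((1 : G) : G ⧸ K)).ncard_dvd_card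
    ⟨_, mem_orbit_self _⟩
  have horbit := index_stabilizer N ((1 : G) : G ⧸ K)
  rw [hstab] at horbit
  exact horbit.dvd.trans hdvd

lemma relIndex_inf_dvd_relIndex (N H : Subgroup G) [N.Normal] :
    K.relIndex (N ⊓ H) ∣ K.relIndex H := by
  rw [← Subgroup.relIndex_subgroupOf (inf_le_right (a := N) (b := H)),
    Subgroup.inf_subgroupOf_right]
  exact relIndex_dvd_index_of_normal_right _

lemma sq_mem_of_relIndex_le_three {H : Subgroup G} (h0 : K.relIndex H ≠ 0)
    (h3 : K.relIndex H ≤ 3) {g : G} (hg : g ∈ H) (h4 : g ^ 4 = 1) : g ^ 2 ∈ K := by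
  obtain ⟨n, hn0, hn, hmem, -⟩ := Subgroup.exists_pow_mem_of_relIndex_ne_zero h0 hg
  obtain rfl | rfl | rfl : n = 1 ∨ n = 2 ∨ n = 3 := by omega
  · exact pow_mem (pow_one g ▸ hmem) 2
  · exact hmem
  · have hsq : (g ^ 3) ^ 2 = g ^ 2 := by
      rw [← pow_mul, pow_eq_pow_mod (3 * 2) h4]
    exact hsq ▸ pow_mem hmem 2

end Subgroup

section Design

variable {𝓑 : Set (Set Pt)} {k lam : ℕ} {x : Pt}

/-- The blocks through the point `x`; their number is `repNum 𝓑 x`. -/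
def blocksThrough (𝓑 : Set (Set Pt)) (x : Pt) : Set (Set Pt) :=
  {B | B ∈ 𝓑 ∧ x ∈ B}

lemma ncard_blocksThrough (𝓑 : Set (Set Pt)) (x : Pt) :
    (blocksThrough 𝓑 x).ncard = repNum 𝓑 x := rfl

lemma ncard_mul_eq_ncard_mul [Finite Pt] {𝓒 : Set (Set Pt)} {T : Set Pt} {c d : ℕ}
    (hc : ∀ B ∈ 𝓒, (T ∩ B).ncard = c) (hd : ∀ x ∈ T, (blocksThrough 𝓒 x).ncard = d) :
    𝓒.ncard * c = T.ncard * d := by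
  classical
  have := Fintype.ofFinite Pt
  rw [Set.ncard_eq_toFinset_card', Set.ncard_eq_toFinset_card']
  refine Finset.card_mul_eq_card_mul (fun B x => x ∈ B) (fun B hB => ?_) fun x hx => ?_
  · rw [← hc B (Set.mem_toFinset.1 hB), ← Set.ncard_coe_finset]
    congr 1
    ext x
    simp [Finset.bipartiteAbove]
  · rw [← hd x (Set.mem_toFinset.1 hx), ← Set.ncard_coe_finset]
    congr 1
    ext B
    simp [Finset.bipartiteBelow, blocksThrough]

lemma blocksThrough_blocksThrough_self (𝓑 : Set (Set Pt)) (x : Pt) :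
    blocksThrough (blocksThrough 𝓑 x) x = blocksThrough 𝓑 x :=
  Set.sep_eq_self_iff_mem_true.2 fun _ hB => hB.2

open scoped Classical in
/-- The block-point incidence matrix of a family of subsets, with real entries so that its Gram
matrix can be shown to be positive definite. -/
noncomputable def incidenceMatrix (𝓑 : Set (Set Pt)) : Matrix 𝓑 Pt ℝ :=
  Matrix.of fun B x => if x ∈ (B : Set Pt) then 1 else 0

lemma transpose_incidenceMatrix_mul_apply [Fintype 𝓑] (x y : Pt) :
    ((incidenceMatrix 𝓑)ᵀ * incidenceMatrix 𝓑) x y =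
      (blocksThrough (blocksThrough 𝓑 x) y).ncard := by
  classical
  have hsub : blocksThrough (blocksThrough 𝓑 x) y ⊆ Set.range ((↑) : 𝓑 → Set Pt) :=
    fun B hB => ⟨⟨B, hB.1.1⟩, rfl⟩
  rw [Matrix.mul_apply, ← Set.ncard_preimage_of_injective_subset_range Subtype.val_injective hsub,
    Set.ncard_eq_toFinset_card']
  simp only [transpose_apply, incidenceMatrix, Matrix.of_apply, ite_zero_mul_ite_zero, mul_one,
    Finset.sum_boole]
  congr 2
  ext B
  rw [Set.mem_toFinset]
  simp [blocksThrough]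

namespace IsDesign

lemma ncard_blocksThrough_blocksThrough (hD : IsDesign 𝓑 k lam) {y : Pt} (hxy : x ≠ y) :
    (blocksThrough (blocksThrough 𝓑 x) y).ncard = lam := by
  rw [← hD.pair_count x y hxy, ← Nat.card_coe_set_eq]
  exact Nat.card_congr (Equiv.subtypeEquivRight fun B => and_assoc)

lemma repNum_mul_ncard_inter [Finite Pt] (hD : IsDesign 𝓑 k lam) {T : Set Pt} (hx : x ∉ T)
    {c : ℕ} (hc : ∀ B ∈ blocksThrough 𝓑 x, (T ∩ B).ncard = c) :
    repNum 𝓑 x * c = T.ncard * lam :=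
  ncard_mul_eq_ncard_mul hc fun _ hy =>
    hD.ncard_blocksThrough_blocksThrough fun h => hx (h ▸ hy)

lemma repNum_mul [Finite Pt] (hD : IsDesign 𝓑 k lam) (x : Pt) :
    repNum 𝓑 x * (k - 1) = (Nat.card Pt - 1) * lam := by
  rw [hD.repNum_mul_ncard_inter (T := {x}ᶜ) (by simp), Set.ncard_compl, Set.ncard_singleton]
  rintro B ⟨hB, hx⟩
  rw [Set.inter_comm, ← Set.sdiff_eq, Set.ncard_sdiff_singleton_of_mem hx, ← hD.block_card B hB]
  rfl

lemma repNum_eq_repNum [Finite Pt] (hD : IsDesign 𝓑 k lam) (hk : 1 < k) (x y : Pt) :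
    repNum 𝓑 x = repNum 𝓑 y :=
  Nat.eq_of_mul_eq_mul_right (Nat.sub_pos_of_lt hk) ((hD.repNum_mul x).trans (hD.repNum_mul y).symm)

lemma card_mul [Finite Pt] (hD : IsDesign 𝓑 k lam) (hk : 1 < k) (x : Pt) :
    Nat.card 𝓑 * k = Nat.card Pt * repNum 𝓑 x := by
  rw [← Set.ncard_univ Pt]
  refine ncard_mul_eq_ncard_mul (fun B hB => ?_) fun y _ => hD.repNum_eq_repNum hk y x
  rw [Set.univ_inter]
  exact hD.block_card B hB

open scoped Classical in
/-- The Gram matrix of the columns of the incidence matrix has entries `repNum 𝓑 x` on the diagonal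
and `lam` elsewhere, hence is positive definite. -/
lemma card_le_card [Finite Pt] (hD : IsDesign 𝓑 k lam) (hlam : ∀ x, lam < repNum 𝓑 x) :
    Nat.card Pt ≤ Nat.card 𝓑 := by
  have := Fintype.ofFinite Pt
  have hgram : (incidenceMatrix 𝓑)ᵀ * incidenceMatrix 𝓑 =
      diagonal (fun x => (repNum 𝓑 x : ℝ) - lam) + lam • Matrix.vecMulVec 1 (star 1) := by
    ext x y
    rw [transpose_incidenceMatrix_mul_apply, Matrix.add_apply, Matrix.smul_apply]
    rcases eq_or_ne x y with rfl | hxy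
    · rw [blocksThrough_blocksThrough_self, ncard_blocksThrough]
      simp [vecMulVec_apply]
    · rw [hD.ncard_blocksThrough_blocksThrough hxy]
      simp [vecMulVec_apply, hxy]
  have hpos : ((incidenceMatrix 𝓑)ᵀ * incidenceMatrix 𝓑).PosDef := by
    rw [hgram]
    exact (PosDef.diagonal fun x => sub_pos.2 (by exact_mod_cast hlam x)).add_posSemidef
      ((posSemidef_vecMulVec_self_star 1).smul lam.zero_le)
  have hrank := rank_of_isUnit _ hpos.isUnit
  rw [rank_transpose_mul_self] at hrank
  rw [Nat.card_eq_fintype_card, Nat.card_eq_fintype_card, ← hrank]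
  exact (incidenceMatrix 𝓑).rank_le_card_height

lemma lt_repNum [Finite Pt] (hD : IsDesign 𝓑 k lam) (hlam : 0 < lam) (hk : 0 < k)
    (hkv : k < Nat.card Pt) (x : Pt) : lam < repNum 𝓑 x := by
  have hr := hD.repNum_mul x
  by_contra! hle
  have h1 : (Nat.card Pt - 1) * lam ≤ (k - 1) * lam := by
    rw [← hr, mul_comm]
    exact Nat.mul_le_mul_left _ hle
  have := Nat.le_of_mul_le_mul_right h1 hlam
  omega

lemma le_repNum [Finite Pt] (hD : IsDesign 𝓑 k lam) (hlam : 0 < lam) (hk : 1 < k)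
    (hkv : k < Nat.card Pt) (x : Pt) : k ≤ repNum 𝓑 x := by
  refine Nat.le_of_mul_le_mul_left ?_ (hkv.trans' (by omega : 0 < k))
  rw [← hD.card_mul hk x]
  exact Nat.mul_le_mul_right k (hD.card_le_card (hD.lt_repNum hlam (by omega) hkv))

/-- Two distinct blocks through `x` and `y` have no further common point, whereas all of them
contain `z • y`. -/
lemma smul_eq_self_of_forall_blocksThrough {G : Type*} [Group G] [MulAction G Pt]
    (hD : IsDesign 𝓑 3 lam) (hlam : 1 < lam) {z : G} (hx : z • x = x)
    (hz : ∀ B ∈ blocksThrough 𝓑 x, z • B = B) (y : Pt) : z • y = y := by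
  rcases eq_or_ne x y with rfl | hxy
  · exact hx
  by_contra hzy
  have hblock (B : Set Pt) (hB : B ∈ blocksThrough (blocksThrough 𝓑 x) y) :
      ({x, y, z • y} : Set Pt) = B := by
    obtain ⟨hBx, hyB⟩ := hB
    have hcard : B.ncard = 3 := hD.block_card B hBx.1
    have hsub : ({x, y, z • y} : Set Pt) ⊆ B := by
      rintro w (rfl | rfl | rfl)
      · exact hBx.2
      · exact hyB
      · exact hz B hBx ▸ Set.smul_mem_smul_set hyB
    have hxz : x ≠ z • y := fun h => hxy (smul_left_cancel z (hx.trans h))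
    refine Set.eq_of_subset_of_ncard_le hsub ?_ (Set.finite_of_ncard_ne_zero (by omega))
    rw [hcard, Set.ncard_eq_three.2 ⟨x, y, z • y, hxy, hxz, Ne.symm hzy, rfl⟩]
  rw [← hD.ncard_blocksThrough_blocksThrough hxy] at hlam
  obtain ⟨B, hB, hne⟩ := Set.exists_ne_of_one_lt_ncard hlam {x, y, z • y}
  exact hne (hblock B hB).symm

end IsDesign

section Action

variable {G : Type*} [Group G] [MulAction G Pt]

open MulAction

lemma orbit_stabilizer_eq_blocksThrough (hacts : ActsOn G 𝓑) (hflag : FlagTransitive G 𝓑)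
    {B : Set Pt} (hB : B ∈ blocksThrough 𝓑 x) :
    orbit (stabilizer G x) B = blocksThrough 𝓑 x := by
  ext C
  constructor
  · rintro ⟨g, rfl⟩
    have hgx : (g : G) • x = x := g.2
    exact ⟨hacts g B hB.1, x, hB.2, hgx⟩
  · intro hC
    obtain ⟨g, hgB, hgx⟩ := hflag B hB.1 C hC.1 x hB.2 x hC.2
    exact ⟨⟨g, hgx⟩, hgB⟩

lemma ncard_inter_smul_eq {T : Set Pt} (hT : ∀ g ∈ stabilizer G x, ∀ y ∈ T, g • y ∈ T) {g : G}
    (hg : g ∈ stabilizer G x) (B : Set Pt) : (T ∩ g • B).ncard = (T ∩ B).ncard := by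
  have hgT : g • T = T := by
    refine Set.Subset.antisymm (Set.smul_set_subset_iff.2 fun y hy => hT g hg y hy) fun y hy => ?_
    exact Set.mem_smul_set_iff_inv_smul_mem.2 (hT _ (inv_mem hg) y hy)
  rw [← hgT, ← Set.smul_set_inter, hgT]
  exact Set.ncard_smul_set g _

/-- The stabilizer of `x` is transitive on the blocks through `x`, which therefore all meet `T` in
the same number of points. -/
lemma IsDesign.repNum_dvd [Finite Pt] (hD : IsDesign 𝓑 k lam) (hflag : FlagTransitive G 𝓑)
    {T : Set Pt} (hx : x ∉ T) (hT : ∀ g ∈ stabilizer G x, ∀ y ∈ T, g • y ∈ T) :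
    repNum 𝓑 x ∣ T.ncard * lam := by
  rcases (blocksThrough 𝓑 x).eq_empty_or_nonempty with h | ⟨B, hB⟩
  · rw [← hD.repNum_mul_ncard_inter hx (c := 0) (by simp [h])]
    exact dvd_mul_right _ _
  · rw [← hD.repNum_mul_ncard_inter hx (c := (T ∩ B).ncard)]
    · exact dvd_mul_right _ _
    · intro C hC
      obtain ⟨g, rfl, hgx⟩ := hflag B hB.1 C hC.1 x hB.2 x hC.2
      exact ncard_inter_smul_eq hT hgx B

lemma card_inf_stabilizer (X : Subgroup G) (x : Pt) :
    Nat.card (X ⊓ stabilizer G x : Subgroup G) = Nat.card (stabilizer X x) := by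
  rw [← Nat.card_congr (Subgroup.subgroupOfEquivOfLe (inf_le_left (a := X))).toEquiv,
    Subgroup.inf_subgroupOf_left]
  rfl

/-- The orbit of `B` under the normal subgroup `X_x` of `G_x` has odd size dividing `24`, hence at
most three. -/
lemma sq_smul_eq_of_odd_repNum (hacts : ActsOn G 𝓑) (hflag : FlagTransitive G 𝓑)
    {X : Subgroup G} [X.Normal] (hcard : Nat.card (stabilizer X x) = 24)
    (hodd : Odd (repNum 𝓑 x)) {g : G} (hgX : g ∈ X) (hgx : g ∈ stabilizer G x) (h4 : g ^ 4 = 1)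
    {B : Set Pt} (hB : B ∈ blocksThrough 𝓑 x) : g ^ 2 • B = B := by
  have hrep : (stabilizer G B).relIndex (stabilizer G x) = repNum 𝓑 x := by
    rw [← ncard_blocksThrough, ← orbit_stabilizer_eq_blocksThrough hacts hflag hB,
      ← index_stabilizer]
    rfl
  set n := (stabilizer G B).relIndex (X ⊓ stabilizer G x)
  have hdvd : n ∣ repNum 𝓑 x := hrep ▸ relIndex_inf_dvd_relIndex X (stabilizer G x)
  have h24 : n ∣ 24 := by
    rw [← hcard, ← card_inf_stabilizer]
    exact Subgroup.relIndex_dvd_card _ _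
  have h3 : n ∣ 3 := (hodd.of_dvd_nat hdvd).coprime_two_right.pow_right 3 |>.dvd_of_dvd_mul_left h24
  exact sq_mem_of_relIndex_le_three (ne_zero_of_dvd_ne_zero three_ne_zero h3)
    (Nat.le_of_dvd three_pos h3) (Subgroup.mem_inf.2 ⟨hgX, hgx⟩) h4

end Action

end Design

section StabilizerSymmetric

open MulAction

variable {F X P : Type*} [Field F] [Finite F] [Group X] [MulAction X P] [IsPretransitive X P]
  {x : P}

lemma card_mul_eq_of_stabilizer_mulEquiv (φ : X ≃* PSL2 F)
    (e : stabilizer X x ≃* Equiv.Perm (Fin 4)) :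
    48 * Nat.card P = Nat.card F * (Nat.card F ^ 2 - 1) := by
  obtain ⟨s, hs⟩ := exists_orderOf_eq_four_of_mulEquiv e
  have hφ : orderOf (φ s) = 4 := by rw [φ.orderOf_eq, Subgroup.orderOf_coe, hs]
  have hcard := (stabilizer X x).card_mul_index
  rw [index_stabilizer_of_transitive, Nat.card_congr e.toEquiv, card_perm_fin_four,
    Nat.card_congr φ.toEquiv] at hcard
  rw [← two_mul_card_PSL2 (two_ne_zero_of_orderOf_eq_four hφ), ← hcard]
  ring

lemma ncard_fixedBy_of_orderOf_eq_four (φ : X ≃* PSL2 F)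
    (e : stabilizer X x ≃* Equiv.Perm (Fin 4)) {s : stabilizer X x} (hs : orderOf s = 4) :
    8 * (fixedBy P (s : X)).ncard ≤ Nat.card F + 1 ∧
      Nat.card F ≤ 8 * (fixedBy P (s : X)).ncard + 1 := by
  have hφ : orderOf (φ s) = 4 := by rw [φ.orderOf_eq, Subgroup.orderOf_coe, hs]
  have hcentralizer : Nat.card (Subgroup.centralizer {(s : X)}) =
      Nat.card (Subgroup.centralizer {φ s}) :=
    Nat.card_congr (φ.toEquiv.subtypeEquiv fun g => by
      simp only [Subgroup.mem_centralizer_singleton_iff, MulEquiv.toEquiv_eq_coe,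
        MulEquiv.coe_toEquiv, ← map_mul, φ.injective.eq_iff])
  have hcard := card_centralizer_of_orderOf_eq_four hφ
  rw [← hcentralizer, ← four_mul_ncard_fixedBy e hs] at hcard
  omega

lemma ncard_fixedPointsOfOrder_four_le [Finite P] (φ : X ≃* PSL2 F)
    (e : stabilizer X x ≃* Equiv.Perm (Fin 4)) :
    8 * (fixedPointsOfOrder X 4 x).ncard ≤ 3 * (Nat.card F - 7) := by
  have := Finite.of_equiv _ e.symm.toEquiv
  have hle := two_mul_ncard_fixedPointsOfOrder_le (G := X) (x := x) (n := 4)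
    (m := (Nat.card F - 7) / 8) (by norm_num) fun s hs => by
      have := ncard_fixedBy_of_orderOf_eq_four φ e hs
      omega
  rw [ncard_orderOf_eq_four_of_mulEquiv e] at hle
  omega

lemma fixedPointsOfOrder_four_nonempty (φ : X ≃* PSL2 F)
    (e : stabilizer X x ≃* Equiv.Perm (Fin 4)) (hF : 9 < Nat.card F) :
    (fixedPointsOfOrder X 4 x).Nonempty := by
  obtain ⟨s, hs⟩ := exists_orderOf_eq_four_of_mulEquiv e
  have hcard := ncard_fixedBy_of_orderOf_eq_four φ e hs
  obtain ⟨y, hy, hne⟩ := Set.exists_ne_of_one_lt_ncard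
    (show 1 < (fixedBy P (s : X)).ncard by omega) x
  exact ⟨y, hne, s, hs, hy⟩

end StabilizerSymmetric

section Parameters

variable {q v k r : ℕ}

/-- The hypotheses give `3 * v ≤ r ^ 2 + 3`, quadratic in `q`, while `v` is cubic in `q`. -/
lemma lt_eleven_of_le (hv : 48 * v = q * (q ^ 2 - 1)) (hk : r * (k - 1) = (v - 1) * 3)
    (hkr : k ≤ r) (hr : 8 * r ≤ 9 * (q - 7)) : q < 11 := by
  by_contra! hq
  obtain ⟨u, rfl⟩ : ∃ u, q = u + 11 := ⟨q - 11, by omega⟩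
  have hfactor : (u + 11) ^ 2 - 1 = (u + 10) * (u + 12) := by ring_nf; omega
  have hr : 8 * r ≤ 9 * (u + 4) := by omega
  have hvr : 3 * v ≤ r ^ 2 + 3 := by
    have : r * (k - 1) ≤ r * r := Nat.mul_le_mul_left _ (by omega)
    rw [← pow_two] at this
    omega
  have hr2 : (8 * r) ^ 2 ≤ (9 * (u + 4)) ^ 2 := Nat.pow_le_pow_left hr 2
  rw [hfactor] at hv
  nlinarith [Nat.zero_le (u ^ 3)]

/-- Only `q = 7`, `v = 7` and `q = 9`, `v = 15` are possible, with `r * (k - 1) = 18` and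
`r * (k - 1) = 42` respectively. -/
lemma eq_three_and_odd_of_lt_eleven {b : ℕ} (hq : q < 11) (hv : 48 * v = q * (q ^ 2 - 1))
    (hk : r * (k - 1) = (v - 1) * 3) (hk2 : 2 < k) (hkv : k < v) (hb : b * k = v * r)
    (h3r : 3 ∣ r) : k = 3 ∧ Odd r := by
  obtain ⟨r', rfl⟩ := h3r
  have hv : v = 7 ∨ v = 15 := by interval_cases q <;> omega
  rw [Nat.odd_iff]
  rcases hv with rfl | rfl <;> interval_cases k <;> omega

end Parameters

section Main

open MulAction

variable {F G : Type*} [Field F] [Finite F] [Group G] [Finite Pt] [MulAction G Pt]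
  {𝓑 : Set (Set Pt)} {k : ℕ} {X : Subgroup G} [IsPretransitive X Pt] {α : Pt}

lemma IsDesign.card_lt_eleven (hD : IsDesign 𝓑 k 3) (hk : 1 < k) (hkv : k < Nat.card Pt)
    (hflag : FlagTransitive G 𝓑) (hX : X.Normal) (φ : X ≃* PSL2 F)
    (e : stabilizer X α ≃* Equiv.Perm (Fin 4)) : Nat.card F < 11 := by
  by_contra! hq
  have hdvd := hD.repNum_dvd hflag (notMem_fixedPointsOfOrder 4 α)
    fun g hg y hy => smul_mem_fixedPointsOfOrder hX hg hy
  have hpos := (fixedPointsOfOrder_four_nonempty φ e (by omega)).ncard_pos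
  have hle := Nat.le_of_dvd (Nat.mul_pos hpos three_pos) hdvd
  have hcard := ncard_fixedPointsOfOrder_four_le φ e
  have := lt_eleven_of_le (card_mul_eq_of_stabilizer_mulEquiv φ e) (hD.repNum_mul α)
    (hD.le_repNum three_pos hk hkv α) (by omega)
  omega

end Main

end FT

open MulAction in
theorem stmt_13_general {F Pt G : Type*} [Field F] [Finite F] [Finite Pt] [Group G]
    [MulAction G Pt] [FaithfulSMul G Pt] {𝓑 : Set (Set Pt)} {k : ℕ} {α : Pt}
    (hD : IsDesign 𝓑 k 3) (hk : 2 < k) (hkv : k < Nat.card Pt) (h3r : 3 ∣ repNum 𝓑 α)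
    (hacts : ActsOn G 𝓑) (hflag : FlagTransitive G 𝓑) {X : Subgroup G} (hX : X.Normal)
    (φ : X ≃* PSL2 F) (htrans : IsPretransitive X Pt) :
    IsEmpty (stabilizer X α ≃* Equiv.Perm (Fin 4)) := by
  refine ⟨fun e => ?_⟩
  have hq : Nat.card F < 11 := hD.card_lt_eleven (by omega) hkv hflag hX φ e
  obtain ⟨rfl, hodd⟩ := eq_three_and_odd_of_lt_eleven hq
    (card_mul_eq_of_stabilizer_mulEquiv φ e) (hD.repNum_mul α) hk hkv
    (hD.card_mul (by omega) α) h3r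
  obtain ⟨s, hs⟩ := exists_orderOf_eq_four_of_mulEquiv e
  rw [← Subgroup.orderOf_coe, ← Subgroup.orderOf_coe, orderOf_eq_four_iff] at hs
  have hfix (y : Pt) : ((s : X) : G) ^ 2 • y = y :=
    hD.smul_eq_self_of_forall_blocksThrough (by norm_num)
      (pow_mem (show ((s : X) : G) ∈ stabilizer G α from s.2) 2)
      (fun B hB => sq_smul_eq_of_odd_repNum hacts hflag
        ((Nat.card_congr e.toEquiv).trans card_perm_fin_four) hodd s.1.2 s.2 hs.1 hB) y
  exact hs.2 (FaithfulSMul.eq_of_smul_eq_smul fun y => (hfix y).trans (one_smul G y).symm)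

/-- In the setting of a non-trivial, non-symmetric flag-transitive,
point-primitive `2-(v,k,3)` design with `3 ∣ r`, almost simple automorphism group `G` with
socle `X ≅ PSL(2,q)` acting point-primitively with maximal point stabilizer `X_α`:
the stabilizer `X_α` is not isomorphic to the symmetric group `S₄` (in particular, the case
`q = p ≡ ±1 (mod 8)` prime, `X_α ≅ S₄`, `v = q(q²−1)/48` does not occur). -/
theorem stmt_13
    (q : ℕ) (hq4 : 4 ≤ q)
    (F : Type) [Field F] [Fintype F] (hF : Fintype.card F = q)
    {Pt : Type*} [Fintype Pt] {G : Type*} [Group G] [MulAction G Pt] [FaithfulSMul G Pt]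
    -- `D = (Pt, 𝓑)` is a non-trivial, non-symmetric `2-(v,k,3)` design …
    (𝓑 : Set (Set Pt)) (v k : ℕ) (hv : Nat.card Pt = v)
    (hD : IsDesign 𝓑 k 3) (hnt : 2 < k ∧ k < v - 1)
    (hnonsym : Nat.card 𝓑 ≠ v)
    -- … whose replication number `r` is divisible by 3, …
    (r : ℕ) (hr : ∀ x : Pt, repNum 𝓑 x = r) (h3r : 3 ∣ r)
    -- … admitting the flag-transitive, point-primitive automorphism group `G`, …
    (hacts : ActsOn G 𝓑) (hflag : FlagTransitive G 𝓑)
    (hprim : PointPrimitive G Pt)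
    -- … where `G` is almost simple with socle `X ≅ PSL(2,q)` (so `PSL(2,q) ⊴ G ≤ PΓL(2,q)`):
    (X : Subgroup G) (hXnormal : X.Normal)
    (hXiso : Nonempty (X ≃* PSL2 F))
    (hXcent : Subgroup.centralizer (X : Set G) = ⊥)
    -- `X` acts point-primitively on `D`, with maximal point stabilizer `X_α`:
    (hXprim : PointPrimitive X Pt)
    (α : Pt) (hmax : IsCoatom (MulAction.stabilizer X α))
    :
    IsEmpty ((MulAction.stabilizer X α) ≃* Equiv.Perm (Fin 4)) := by
  exact stmt_13_general hD hnt.1 (by omega) ((hr α).symm ▸ h3r) hacts hflag hXnormal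
    hXiso.some hXprim.1
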